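/- Let x : [0,1] → ℝ be a nonconstant continuous function that admits the Hurst roughness exponent H and for which ξ := lim_{n→∞} ξ_n exists. If H ≥ 1/2, then H ≥ 1 − ξ. -/

import Mathlib

/-!
Write `V_n^{(p)}` for the `p`-th variation. By the parallelogram identity on each dyadic interval,
the squared Faber–Schauder coefficients telescope: `s_n² = 2 ^ n * V_n^{(2)} - V_0^{(2)}`. For
`p ≤ 2`, Jensen's inequality over the `2 ^ n` increments bounds `2 ^ n * V_n^{(2)}` below by
`(2 ^ (n * (1 - 1 / p)))² * (V_n^{(p)}) ^ (2 / p)`. If `V_n^{(p)} → ∞` with `1 ≤ p ≤ 2`, this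
eventually absorbs the boundary term, whence `s_n ≥ 2 ^ (n * (1 - 1 / p))` and `ξ ≥ 1 - 1 / p`. The
last bound also holds for `p < 1`, as `s_n` is nondecreasing and so `ξ ≥ 0`. Now let
`1 / p` decrease to `max H (1 / 2)`.
-/

open Filter Finset

noncomputable section

/-- The `n`-th dyadic `p`-th variation of `x`. -/
def dyadicVar (x : ℝ → ℝ) (p : ℝ) (n : ℕ) : ℝ :=
  ∑ k ∈ Finset.range (2 ^ n), |x (((k : ℝ) + 1) / 2 ^ n) - x ((k : ℝ) / 2 ^ n)| ^ p

/-- `x` is nonconstant on `[0,1]`. -/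
def Nonconstant (x : ℝ → ℝ) : Prop :=
  ∃ s ∈ Set.Icc (0 : ℝ) 1, ∃ t ∈ Set.Icc (0 : ℝ) 1, x s ≠ x t

/-- `x` admits the Hurst roughness exponent `H ∈ (0,1]`. -/
def HasHurstExponent (x : ℝ → ℝ) (H : ℝ) : Prop :=
  0 < H ∧ H ≤ 1 ∧
  (∀ p : ℝ, 1 / H < p → Tendsto (dyadicVar x p) atTop (nhds 0)) ∧
  (∀ p : ℝ, 0 < p → p < 1 / H → Tendsto (dyadicVar x p) atTop atTop)

/-- Faber–Schauder coefficient `θ_{m,k}` of `x`. -/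
def fsCoeff (x : ℝ → ℝ) (m k : ℕ) : ℝ :=
  2 ^ ((m : ℝ) / 2) *
    (2 * x ((2 * (k : ℝ) + 1) / 2 ^ (m + 1)) - x ((k : ℝ) / 2 ^ m) - x (((k : ℝ) + 1) / 2 ^ m))

/-- `s_n = (∑_{m<n} ∑_{k<2^m} θ_{m,k}²)^{1/2}`. -/
def sSeq (x : ℝ → ℝ) (n : ℕ) : ℝ :=
  Real.sqrt (∑ m ∈ Finset.range n, ∑ k ∈ Finset.range (2 ^ m), fsCoeff x m k ^ 2)

/-- `ξ_n = (1/n) log₂ s_n`. -/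
def xiSeq (x : ℝ → ℝ) (n : ℕ) : ℝ := Real.logb 2 (sSeq x n) / n

/-- A nondecreasing function `ϱ : ℕ → [1,∞)` is subexponential if `(1/n) log ϱ(n) → 0`. -/
def Subexponential (ϱ : ℕ → ℝ) : Prop :=
  Monotone ϱ ∧ (∀ n, 1 ≤ ϱ n) ∧ Tendsto (fun n : ℕ => Real.log (ϱ n) / n) atTop (nhds 0)

/-- The quantity `2^{-(n-1)} ∑_{k<2^{n-1}} (∑_{m<n} 2^m θ²_{m,⌊2^{m-n+1}k⌋})^{p/2}`;
note that `⌊2^{m-n+1}k⌋ = k / 2^{n-1-m}` (natural number division). -/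
def RJquantity (x : ℝ → ℝ) (p : ℝ) (n : ℕ) : ℝ :=
  (∑ k ∈ Finset.range (2 ^ (n - 1)),
      (∑ m ∈ Finset.range n, 2 ^ m * fsCoeff x m (k / 2 ^ (n - 1 - m)) ^ 2) ^ (p / 2)) /
    2 ^ (n - 1)

/-- The reverse Jensen condition on the Faber–Schauder coefficients of `x`. -/
def ReverseJensen (x : ℝ → ℝ) : Prop :=
  ∀ p : ℝ, 1 ≤ p → ∃ np : ℕ, ∃ ϱ : ℕ → ℝ, Subexponential ϱ ∧
    ∀ n : ℕ, np ≤ n →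
      (ϱ n)⁻¹ * sSeq x n ^ p ≤ RJquantity x p n ∧ RJquantity x p n ≤ ϱ n * sSeq x n ^ p

/-- The increment of `x` over the `k`-th dyadic interval `[k / 2 ^ n, (k + 1) / 2 ^ n]` of
generation `n`. It is the common building block of the variations and of the Faber–Schauder
coefficients. -/
def dyadicIncr (x : ℝ → ℝ) (n k : ℕ) : ℝ :=
  x (((k : ℝ) + 1) / 2 ^ n) - x ((k : ℝ) / 2 ^ n)

lemma sum_range_two_mul {M : Type*} [AddCommMonoid M] (f : ℕ → M) (N : ℕ) :
    ∑ k ∈ range (2 * N), f k = ∑ k ∈ range N, (f (2 * k) + f (2 * k + 1)) := by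
  induction N with
  | zero => simp
  | succ N ih => rw [Nat.mul_succ, sum_range_succ, sum_range_succ, sum_range_succ, ih, add_assoc]

/-- If `u` vanishes identically, the convention `Real.logb b 0 = 0` gives `l = 0`. -/
lemma nonneg_of_tendsto_logb_div {b : ℝ} (hb : 1 < b) {u : ℕ → ℝ} (hu : Monotone u)
    (hu0 : ∀ n, 0 ≤ u n) {l : ℝ} (hl : Tendsto (fun n ↦ Real.logb b (u n) / n) atTop (nhds l)) :
    0 ≤ l := by
  by_cases hpos : ∃ N, 0 < u N
  · obtain ⟨N, hN⟩ := hpos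
    refine le_of_tendsto_of_tendsto
      (tendsto_const_div_atTop_nhds_zero_nat (Real.logb b (u N))) hl ?_
    filter_upwards [eventually_ge_atTop N] with n hn
    gcongr
    exact hu hn
  · push Not at hpos
    have hzero : ∀ n, u n = 0 := fun n ↦ (hpos n).antisymm (hu0 n)
    exact ge_of_tendsto' hl fun n ↦ by simp [hzero n]

section

variable (x : ℝ → ℝ)

lemma dyadicVar_eq_sum_dyadicIncr (p : ℝ) (n : ℕ) :
    dyadicVar x p n = ∑ k ∈ range (2 ^ n), |dyadicIncr x n k| ^ p :=
  rfl

lemma dyadicVar_two (n : ℕ) :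
    dyadicVar x 2 n = ∑ k ∈ range (2 ^ n), dyadicIncr x n k ^ 2 := by
  simp only [dyadicVar_eq_sum_dyadicIncr, Real.rpow_two, sq_abs]

lemma dyadicVar_nonneg (p : ℝ) (n : ℕ) : 0 ≤ dyadicVar x p n :=
  sum_nonneg fun _ _ ↦ Real.rpow_nonneg (abs_nonneg _) p

lemma dyadicIncr_succ_two_mul (n k : ℕ) :
    dyadicIncr x (n + 1) (2 * k) =
      x ((2 * (k : ℝ) + 1) / 2 ^ (n + 1)) - x ((k : ℝ) / 2 ^ n) := by
  have hleft : 2 * (k : ℝ) / 2 ^ (n + 1) = k / 2 ^ n := by field_simp; ring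
  simp only [dyadicIncr, Nat.cast_mul, Nat.cast_ofNat, hleft]

lemma dyadicIncr_succ_two_mul_add_one (n k : ℕ) :
    dyadicIncr x (n + 1) (2 * k + 1) =
      x (((k : ℝ) + 1) / 2 ^ n) - x ((2 * (k : ℝ) + 1) / 2 ^ (n + 1)) := by
  have hright : (2 * (k : ℝ) + 1 + 1) / 2 ^ (n + 1) = (k + 1) / 2 ^ n := by field_simp; ring
  simp only [dyadicIncr, Nat.cast_add, Nat.cast_mul, Nat.cast_ofNat, Nat.cast_one, hright]

lemma dyadicIncr_eq_add (n k : ℕ) :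
    dyadicIncr x n k = dyadicIncr x (n + 1) (2 * k) + dyadicIncr x (n + 1) (2 * k + 1) := by
  rw [dyadicIncr_succ_two_mul, dyadicIncr_succ_two_mul_add_one, dyadicIncr]
  ring

lemma fsCoeff_eq_mul_sub (m k : ℕ) :
    fsCoeff x m k = 2 ^ ((m : ℝ) / 2) *
      (dyadicIncr x (m + 1) (2 * k) - dyadicIncr x (m + 1) (2 * k + 1)) := by
  rw [dyadicIncr_succ_two_mul, dyadicIncr_succ_two_mul_add_one, fsCoeff]
  ring

/-- The parallelogram identity `(a - b)² = 2 (a² + b²) - (a + b)²`, scaled by `2 ^ m`. -/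
lemma fsCoeff_sq (m k : ℕ) :
    fsCoeff x m k ^ 2 =
      2 ^ (m + 1) * (dyadicIncr x (m + 1) (2 * k) ^ 2 + dyadicIncr x (m + 1) (2 * k + 1) ^ 2) -
        2 ^ m * dyadicIncr x m k ^ 2 := by
  have hscale : ((2 : ℝ) ^ ((m : ℝ) / 2)) ^ 2 = 2 ^ m := by
    rw [← Real.rpow_mul_natCast zero_le_two, Nat.cast_ofNat, div_mul_cancel₀ _ two_ne_zero,
      Real.rpow_natCast]
  rw [fsCoeff_eq_mul_sub, mul_pow, hscale, dyadicIncr_eq_add x m k]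
  ring

lemma sum_fsCoeff_sq (m : ℕ) :
    ∑ k ∈ range (2 ^ m), fsCoeff x m k ^ 2 =
      2 ^ (m + 1) * dyadicVar x 2 (m + 1) - 2 ^ m * dyadicVar x 2 m := by
  simp only [fsCoeff_sq, sum_sub_distrib, ← mul_sum]
  rw [dyadicVar_two, dyadicVar_two, ← sum_range_two_mul fun k ↦ dyadicIncr x (m + 1) k ^ 2,
    ← pow_succ']

lemma sSeq_nonneg (n : ℕ) : 0 ≤ sSeq x n :=
  Real.sqrt_nonneg _

lemma sSeq_monotone : Monotone (sSeq x) := fun _ _ h ↦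
  Real.sqrt_le_sqrt <| sum_le_sum_of_subset_of_nonneg (range_mono h)
    fun _ _ _ ↦ sum_nonneg fun _ _ ↦ sq_nonneg _

lemma sSeq_sq (n : ℕ) : sSeq x n ^ 2 = 2 ^ n * dyadicVar x 2 n - dyadicVar x 2 0 := by
  rw [sSeq, Real.sq_sqrt (sum_nonneg fun _ _ ↦ sum_nonneg fun _ _ ↦ sq_nonneg _)]
  simp only [sum_fsCoeff_sq]
  rw [sum_range_sub fun m ↦ 2 ^ m * dyadicVar x 2 m, pow_zero, one_mul]

end

section

variable {x : ℝ → ℝ} {p ξ : ℝ} {n : ℕ}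

/-- Jensen's inequality for `t ↦ t ^ (r / p)`, averaged over the `2 ^ n` increments. -/
lemma dyadicVar_rpow_div_le {r : ℝ} (hp : 0 < p) (hpr : p ≤ r) :
    dyadicVar x p n ^ (r / p) ≤ (2 ^ n) ^ (r / p - 1) * dyadicVar x r n := by
  have hJensen := Real.rpow_sum_le_const_mul_sum_rpow_of_nonneg (range (2 ^ n))
    (f := fun k ↦ |dyadicIncr x n k| ^ p) ((one_le_div hp).2 hpr) fun _ _ ↦ by positivity
  simpa only [← Real.rpow_mul (abs_nonneg _), mul_div_cancel₀ r hp.ne', card_range, Nat.cast_pow,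
    Nat.cast_ofNat, ← dyadicVar_eq_sum_dyadicIncr] using hJensen

lemma sq_mul_dyadicVar_rpow_le (hp : 0 < p) (hp2 : p ≤ 2) :
    ((2 : ℝ) ^ (n * (1 - 1 / p))) ^ 2 * dyadicVar x p n ^ (2 / p) ≤
      sSeq x n ^ 2 + dyadicVar x 2 0 := by
  have hscale : ((2 : ℝ) ^ (n * (1 - 1 / p))) ^ 2 * (2 ^ n) ^ (2 / p - 1) = 2 ^ n := by
    rw [← Real.rpow_mul_natCast zero_le_two, ← Real.rpow_natCast, ← Real.rpow_mul zero_le_two,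
      ← Real.rpow_add zero_lt_two]
    push_cast
    ring_nf
  calc ((2 : ℝ) ^ (n * (1 - 1 / p))) ^ 2 * dyadicVar x p n ^ (2 / p)
      ≤ (2 ^ (n * (1 - 1 / p))) ^ 2 * ((2 ^ n) ^ (2 / p - 1) * dyadicVar x 2 n) := by
        gcongr
        exact dyadicVar_rpow_div_le hp hp2
    _ = 2 ^ n * dyadicVar x 2 n := by rw [← mul_assoc, hscale]
    _ = sSeq x n ^ 2 + dyadicVar x 2 0 := by rw [sSeq_sq, sub_add_cancel]

lemma rpow_le_sSeq (hp1 : 1 ≤ p) (hp2 : p ≤ 2) (hV : 1 + dyadicVar x 2 0 ≤ dyadicVar x p n) :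
    (2 : ℝ) ^ (n * (1 - 1 / p)) ≤ sSeq x n := by
  have hp : 0 < p := zero_lt_one.trans_le hp1
  have hV0 : 0 ≤ dyadicVar x 2 0 := dyadicVar_nonneg x 2 0
  have hVp : 1 + dyadicVar x 2 0 ≤ dyadicVar x p n ^ (2 / p) :=
    hV.trans (Real.self_le_rpow_of_one_le (by linarith) ((one_le_div hp).2 hp2))
  have hbound := sq_mul_dyadicVar_rpow_le (x := x) (n := n) hp hp2
  set A : ℝ := 2 ^ (n * (1 - 1 / p))
  have hA : 1 ≤ A := Real.one_le_rpow one_le_two <|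
    mul_nonneg n.cast_nonneg (sub_nonneg.2 ((div_le_one hp).2 hp1))
  have hsq : A ^ 2 + dyadicVar x 2 0 ≤ sSeq x n ^ 2 + dyadicVar x 2 0 :=
    calc A ^ 2 + dyadicVar x 2 0
        ≤ A ^ 2 + A ^ 2 * dyadicVar x 2 0 := by
          gcongr
          exact le_mul_of_one_le_left hV0 (one_le_pow₀ hA)
      _ = A ^ 2 * (1 + dyadicVar x 2 0) := by ring
      _ ≤ A ^ 2 * dyadicVar x p n ^ (2 / p) := by gcongr
      _ ≤ sSeq x n ^ 2 + dyadicVar x 2 0 := hbound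
  exact le_of_sq_le_sq (le_of_add_le_add_right hsq) (sSeq_nonneg x n)

lemma le_xiSeq_of_rpow_le_sSeq {a : ℝ} (hn : 0 < n) (h : (2 : ℝ) ^ (n * a) ≤ sSeq x n) :
    a ≤ xiSeq x n := by
  have hs : 0 < sSeq x n := (Real.rpow_pos_of_pos zero_lt_two _).trans_le h
  rw [xiSeq, le_div_iff₀' (Nat.cast_pos.2 hn)]
  exact (Real.le_logb_iff_rpow_le one_lt_two hs).2 h

lemma one_sub_one_div_le_of_tendsto_dyadicVar (hp : 0 < p) (hp2 : p ≤ 2)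
    (hV : Tendsto (dyadicVar x p) atTop atTop) (hξ : Tendsto (xiSeq x) atTop (nhds ξ)) :
    1 - 1 / p ≤ ξ := by
  rcases le_total p 1 with hp1 | hp1
  · exact (sub_nonpos.2 ((one_le_div hp).2 hp1)).trans
      (nonneg_of_tendsto_logb_div one_lt_two (sSeq_monotone x) (sSeq_nonneg x) hξ)
  · refine ge_of_tendsto hξ ?_
    filter_upwards [hV.eventually_ge_atTop (1 + dyadicVar x 2 0), eventually_gt_atTop 0]
      with n hVn hn
    exact le_xiSeq_of_rpow_le_sSeq hn (rpow_le_sSeq hp1 hp2 hVn)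

end

theorem stmt7_general (x : ℝ → ℝ) {H ξ : ℝ} (hH : 0 < H)
    (hdiv : ∀ p : ℝ, 0 < p → p < 1 / H → Tendsto (dyadicVar x p) atTop atTop)
    (hξ : Tendsto (xiSeq x) atTop (nhds ξ)) : 1 - ξ ≤ max H (1 / 2) := by
  refine le_of_forall_gt_imp_ge_of_dense fun q hq ↦ ?_
  obtain ⟨hHq, hhalf⟩ := max_lt_iff.1 hq
  have hq0 : 0 < q := hH.trans hHq
  have hV := hdiv (1 / q) (one_div_pos.2 hq0) (one_div_lt_one_div_of_lt hH hHq)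
  have hq2 : 1 / q ≤ 2 := (one_div_le hq0 two_pos).2 hhalf.le
  have hle := one_sub_one_div_le_of_tendsto_dyadicVar (one_div_pos.2 hq0) hq2 hV hξ
  rw [one_div_one_div] at hle
  exact sub_le_comm.1 hle

theorem stmt7 (x : ℝ → ℝ) (hx : ContinuousOn x (Set.Icc 0 1)) (hnc : Nonconstant x)
    (H ξ : ℝ) (hH : HasHurstExponent x H) (hξ : Tendsto (xiSeq x) atTop (nhds ξ))
    (hhalf : 1 / 2 ≤ H) : 1 - ξ ≤ H := by
  obtain ⟨hH0, -, -, hdiv⟩ := hH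
  exact (stmt7_general x hH0 hdiv hξ).trans_eq (max_eq_left hhalf)
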